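/- arXiv:1301.4421 — 4 statements merged into one kernel-verified Lean document; each statement's English description precedes it below -/
import Mathlib

section
/- If a map M admits an I-coloring and a J-coloring (for subsets I, J of {0,1,2}), then M admits an (IΔJ)-coloring. Consequently, T(M) is a subgroup of the power set of {0,1,2} under the symmetric difference operation Δ. -/
/-- A (combinatorial) map: a nonempty set of flags `Ω` together with three
permutations `r 0, r 1, r 2` which are fixed-point-free involutions, such that
`r 0` and `r 2` commute with fixed-point-free product, and such that the
connection group `⟨r 0, r 1, r 2⟩` acts transitively on `Ω`. -/
structure CMap (Ω : Type) where
  r : Fin 3 → Equiv.Perm Ω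
  nonempty : Nonempty Ω
  invol : ∀ (i : Fin 3) (f : Ω), r i (r i f) = f
  fpf : ∀ (i : Fin 3) (f : Ω), r i f ≠ f
  comm02 : ∀ f : Ω, r 0 (r 2 f) = r 2 (r 0 f)
  fpf02 : ∀ f : Ω, r 0 (r 2 f) ≠ f
  flag_transitive : ∀ f g : Ω,
    ∃ w ∈ Subgroup.closure ({r 0, r 1, r 2} : Set (Equiv.Perm Ω)), w f = g

/-- `a` is an `I`-coloring with respect to the connections `r`. -/
def IsColoringOn {Ω : Type} (r : Fin 3 → Ω → Ω) (I : Set (Fin 3)) (a : Ω → ZMod 2) : Prop :=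
  ∀ (f : Ω) (j : Fin 3), (j ∈ I → a (r j f) = a f + 1) ∧ (j ∉ I → a (r j f) = a f)

/-- There exists an `I`-coloring with respect to the connections `r`. -/
def ColorableOn {Ω : Type} (r : Fin 3 → Ω → Ω) (I : Set (Fin 3)) : Prop :=
  ∃ a : Ω → ZMod 2, IsColoringOn r I a

/-- `a` is an `I`-coloring of the map `M`. -/
def CMap.IsColoring {Ω : Type} (M : CMap Ω) (I : Set (Fin 3)) (a : Ω → ZMod 2) : Prop :=
  IsColoringOn (fun j f => M.r j f) I a

/-- The map `M` admits an `I`-coloring. -/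
def CMap.Colorable {Ω : Type} (M : CMap Ω) (I : Set (Fin 3)) : Prop :=
  ∃ a : Ω → ZMod 2, M.IsColoring I a

/-- `T M` is the collection of subsets `I ⊆ {0,1,2}` for which `M` is `I`-colorable. -/
def CMap.T {Ω : Type} (M : CMap Ω) : Set (Set (Fin 3)) :=
  {I | M.Colorable I}

theorem indicator_symmDiff_apply_of_charTwo {α R : Type*} [Ring R] [CharP R 2]
    (s t : Set α) (f : α → R) (x : α) :
    (symmDiff s t).indicator f x = s.indicator f x + t.indicator f x := by
  rw [← CharTwo.sub_eq_add]
  exact Set.apply_indicator_symmDiff (g := id) CharTwo.neg_eq s t f x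

section IsColoringOn

variable {Ω : Type} {r : Fin 3 → Ω → Ω} {I J : Set (Fin 3)} {a b : Ω → ZMod 2}

theorem isColoringOn_iff_eq_add_indicator :
    IsColoringOn r I a ↔ ∀ f j, a (r j f) = a f + I.indicator 1 j := by
  refine forall₂_congr fun f j => ?_
  by_cases hj : j ∈ I <;> simp [hj]

theorem isColoringOn_empty_zero : IsColoringOn r ∅ 0 := by
  simp [isColoringOn_iff_eq_add_indicator]

theorem IsColoringOn.add_symmDiff (ha : IsColoringOn r I a) (hb : IsColoringOn r J b) :
    IsColoringOn r (symmDiff I J) (a + b) := by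
  rw [isColoringOn_iff_eq_add_indicator] at ha hb ⊢
  intro f j
  calc (a + b) (r j f)
      = (a f + I.indicator 1 j) + (b f + J.indicator 1 j) := congrArg₂ (· + ·) (ha f j) (hb f j)
    _ = (a + b) f + (I.indicator 1 j + J.indicator 1 j) := add_add_add_comm ..
    _ = (a + b) f + (symmDiff I J).indicator 1 j := by
      rw [indicator_symmDiff_apply_of_charTwo]

end IsColoringOn

theorem colorable_symmDiff_and_T_subgroup_general {Ω : Type} (r : Fin 3 → Ω → Ω) :
    (∀ I J : Set (Fin 3), ColorableOn r I → ColorableOn r J → ColorableOn r (symmDiff I J)) ∧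
      ColorableOn r ∅ :=
  ⟨fun _ _ ⟨a, ha⟩ ⟨b, hb⟩ => ⟨a + b, ha.add_symmDiff hb⟩, 0, isColoringOn_empty_zero⟩

/-- If `M` admits an `I`-coloring and a `J`-coloring then it admits
an `I Δ J`-coloring; consequently `T M` is a subgroup of the power set of
`{0,1,2}` under symmetric difference (it contains the identity `∅` and is
closed under the group operation `Δ`; every element is its own inverse). -/
theorem colorable_symmDiff_and_T_subgroup {Ω : Type} (M : CMap Ω) :
    (∀ I J : Set (Fin 3), M.Colorable I → M.Colorable J → M.Colorable (symmDiff I J)) ∧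
      (∅ ∈ M.T ∧ ∀ I ∈ M.T, ∀ J ∈ M.T, symmDiff I J ∈ M.T) := by
  obtain ⟨h_symmDiff, h_empty⟩ := colorable_symmDiff_and_T_subgroup_general fun j => M.r j
  exact ⟨h_symmDiff, h_empty, fun I hI J hJ => h_symmDiff I J hI hJ⟩
end

section
/- If a map M admits an I-coloring, then opp(M) admits a J-coloring, where J = I if 0 ∉ I, and J = IΔ{2} if 0 ∈ I. -/
/-- The connections `(r₀, r₁, r₀r₂)` of the opposite map `opp(M)`
(`f·(r₀r₂)` means apply `r₀`, then `r₂`). -/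
def oppConn {Ω : Type} (M : CMap Ω) : Fin 3 → Ω → Ω :=
  ![fun f => M.r 0 f, fun f => M.r 1 f, fun f => M.r 2 (M.r 0 f)]

/-- The connections `(r₀r₂, r₁, r₂)` of the Petrie map `P(M)`. -/
def petrieConn {Ω : Type} (M : CMap Ω) : Fin 3 → Ω → Ω :=
  ![fun f => M.r 2 (M.r 0 f), fun f => M.r 1 f, fun f => M.r 2 f]

/-!
The coloring itself is never changed. Following `rᵢ` and then `rⱼ` changes the color by the sum of
the two changes, so replacing `rⱼ` by this composite preserves whether `j` switches colors when
`i ∉ I` and reverses it when `i ∈ I`. The opposite map is the case `i = 0`, `j = 2`.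
-/

section Coloring

open scoped symmDiff

variable {Ω : Type} {r : Fin 3 → Ω → Ω} {I J : Set (Fin 3)} {a : Ω → ZMod 2} {i j : Fin 3}

namespace IsColoringOn

theorem update (h : IsColoringOn r I a) (hIJ : ∀ k ≠ j, k ∈ J ↔ k ∈ I) {s : Ω → Ω}
    (hs : ∀ f, (j ∈ J → a (s f) = a f + 1) ∧ (j ∉ J → a (s f) = a f)) :
    IsColoringOn (Function.update r j s) J a := by
  intro f k
  rcases eq_or_ne k j with rfl | hk
  · simpa only [Function.update_self] using hs f
  · simpa only [Function.update_of_ne hk, hIJ k hk] using h f k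

theorem update_comp (h : IsColoringOn r I a) (hi : i ∉ I) :
    IsColoringOn (Function.update r j (r j ∘ r i)) I a := by
  refine h.update (fun _ _ => Iff.rfl) fun f => ?_
  have hri : a (r i f) = a f := (h f i).2 hi
  simpa only [Function.comp_apply, hri] using h (r i f) j

theorem update_comp_symmDiff (h : IsColoringOn r I a) (hi : i ∈ I) :
    IsColoringOn (Function.update r j (r j ∘ r i)) (I ∆ {j}) a := by
  have mem_of_ne (k : Fin 3) (hk : k ≠ j) : k ∈ I ∆ {j} ↔ k ∈ I := by
    simp [Set.mem_symmDiff, hk]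
  have mem_self : j ∈ I ∆ {j} ↔ j ∉ I := by simp [Set.mem_symmDiff]
  refine h.update mem_of_ne fun f => ?_
  have hri : a (r i f) = a f + 1 := (h f i).1 hi
  rw [mem_self, not_not, Function.comp_apply, ← hri]
  refine ⟨(h (r i f) j).2, fun hj => ?_⟩
  calc a (r j (r i f)) = a (r i f) + 1 := (h (r i f) j).1 hj
    _ = a f := by rw [hri, CharTwo.add_cancel_right]

end IsColoringOn

theorem opp_colorable_general (i j : Fin 3) (h : ColorableOn r I) :
    (i ∉ I → ColorableOn (Function.update r j (r j ∘ r i)) I) ∧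
      (i ∈ I → ColorableOn (Function.update r j (r j ∘ r i)) (I ∆ {j})) := by
  obtain ⟨a, ha⟩ := h
  exact ⟨fun hi => ⟨a, ha.update_comp hi⟩, fun hi => ⟨a, ha.update_comp_symmDiff hi⟩⟩

end Coloring

theorem oppConn_eq_update {Ω : Type} (M : CMap Ω) :
    oppConn M = Function.update (fun k => ⇑(M.r k)) 2 (M.r 2 ∘ M.r 0) := by
  funext k
  fin_cases k <;> rfl

/-- if `M` admits an `I`-coloring then `opp(M)` admits a
`J`-coloring, where `J = I` if `0 ∉ I` and `J = I Δ {2}` if `0 ∈ I`. -/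
theorem opp_colorable {Ω : Type} (M : CMap Ω) (I : Set (Fin 3)) (h : M.Colorable I) :
    (0 ∉ I → ColorableOn (oppConn M) I) ∧
      (0 ∈ I → ColorableOn (oppConn M) (symmDiff I {2})) := by
  rw [oppConn_eq_update]
  exact opp_colorable_general 0 2 h
end

section
/- If a map M admits an I-coloring, then the Petrie map P(M) admits a J-coloring, where J = I if 2 ∉ I, and J = IΔ{0} if 2 ∈ I. -/
/-!
A coloring is a function `a` that each connection `r j` translates by a constant `c j : ZMod 2`,
the indicator of `I` at `j`. Hence `r₀r₂` translates the same `a` by `c 0 + c 2`, which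
is `c 0` if `2 ∉ I` and `c 0 + 1` if `2 ∈ I`. Cancelling `c 2` gives the converse.
-/

theorem indicator_symmDiff_of_charTwo {α R : Type*} [Ring R] [CharP R 2] (s t : Set α)
    (f : α → R) : (symmDiff s t).indicator f = s.indicator f + t.indicator f :=
  funext fun x =>
    (Set.apply_indicator_symmDiff (g := id) CharTwo.neg_eq s t f x).trans (CharTwo.sub_eq_add _ _)

theorem isColoringOn_iff_indicator {Ω : Type} {r : Fin 3 → Ω → Ω} {I : Set (Fin 3)}
    {a : Ω → ZMod 2} :
    IsColoringOn r I a ↔ ∀ j f, a (r j f) = a f + I.indicator 1 j := by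
  classical
  rw [IsColoringOn, forall_comm]
  refine forall₂_congr fun j f => ?_
  by_cases hj : j ∈ I <;> simp [hj]

/-- The Petrie operation `(r₀, r₁, r₂) ↦ (r₀r₂, r₁, r₂)` on arbitrary triples of self-maps. As
`f·(r₀r₂)` means apply `r₀`, then `r₂`, the product `r₀r₂` is the composite `r 2 ∘ r 0`. -/
def petrieOn {Ω : Type*} (r : Fin 3 → Ω → Ω) : Fin 3 → Ω → Ω :=
  ![r 2 ∘ r 0, r 1, r 2]

/-- The effect of the Petrie operation on color sets: membership of `0` is toggled when `2 ∈ I`.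
The set `{j | j = 0 ∧ 2 ∈ I}` is `{0}` if `2 ∈ I` and `∅` otherwise, which makes the two cases
uniform. -/
def petrieColors (I : Set (Fin 3)) : Set (Fin 3) :=
  symmDiff I {j | j = 0 ∧ 2 ∈ I}

theorem petrieColors_of_notMem {I : Set (Fin 3)} (hI : 2 ∉ I) : petrieColors I = I := by
  simp [petrieColors, hI]

theorem petrieColors_of_mem {I : Set (Fin 3)} (hI : 2 ∈ I) :
    petrieColors I = symmDiff I {0} := by
  simp [petrieColors, hI]

theorem indicator_petrieColors_zero (I : Set (Fin 3)) :
    (petrieColors I).indicator (1 : Fin 3 → ZMod 2) 0 = I.indicator 1 0 + I.indicator 1 2 := by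
  classical
  rw [petrieColors, indicator_symmDiff_of_charTwo]
  simp [Set.indicator_apply]

theorem indicator_petrieColors_of_ne_zero (I : Set (Fin 3)) {j : Fin 3} (hj : j ≠ 0) :
    (petrieColors I).indicator (1 : Fin 3 → ZMod 2) j = I.indicator 1 j := by
  rw [petrieColors, indicator_symmDiff_of_charTwo]
  simp [hj]

theorem isColoringOn_petrieOn_iff {Ω : Type} {r : Fin 3 → Ω → Ω} {I : Set (Fin 3)}
    {a : Ω → ZMod 2} :
    IsColoringOn (petrieOn r) (petrieColors I) a ↔ IsColoringOn r I a := by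
  have zero_iff_of_two (h₂ : ∀ f, a (r 2 f) = a f + I.indicator 1 2) :
      (∀ f, a (r 2 (r 0 f)) = a f + (petrieColors I).indicator 1 0) ↔
        ∀ f, a (r 0 f) = a f + I.indicator 1 0 := by
    simp only [h₂, indicator_petrieColors_zero, ← add_assoc, add_left_inj]
  simp only [isColoringOn_iff_indicator, Fin.forall_fin_succ, IsEmpty.forall_iff, and_true]
  change (∀ f, a (r 2 (r 0 f)) = a f + (petrieColors I).indicator 1 0) ∧
    (∀ f, a (r 1 f) = a f + (petrieColors I).indicator 1 1) ∧
    (∀ f, a (r 2 f) = a f + (petrieColors I).indicator 1 2) ↔ _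
  rw [indicator_petrieColors_of_ne_zero I (j := 1) (by decide),
    indicator_petrieColors_of_ne_zero I (j := 2) (by decide)]
  exact and_congr_left fun h => zero_iff_of_two h.2

theorem petrie_colorable_general {Ω : Type} (r : Fin 3 → Ω → Ω) (I : Set (Fin 3)) :
    ColorableOn (petrieOn r) (petrieColors I) ↔ ColorableOn r I :=
  exists_congr fun _ => isColoringOn_petrieOn_iff

/-- if `M` admits an `I`-coloring then the Petrie map `P(M)`
admits a `J`-coloring, where `J = I` if `2 ∉ I` and `J = I Δ {0}` if `2 ∈ I`. -/
theorem petrie_colorable {Ω : Type} (M : CMap Ω) (I : Set (Fin 3)) (h : M.Colorable I) :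
    (2 ∉ I → ColorableOn (petrieConn M) I) ∧
      (2 ∈ I → ColorableOn (petrieConn M) (symmDiff I {0})) := by
  have hJ : ColorableOn (petrieConn M) (petrieColors I) :=
    (petrie_colorable_general (fun j f => M.r j f) I).mpr h
  exact ⟨fun hI => petrieColors_of_notMem hI ▸ hJ, fun hI => petrieColors_of_mem hI ▸ hJ⟩
end

section
/- Let M be a map and let I ⊆ {0,1,2} with I ∉ T(M) (i.e., M admits no I-coloring). Then the I-double I≻M is a map (in particular ⟨t₀,t₁,t₂⟩ acts transitively on Ω×ℤ/2ℤ), and T(I≻M) = T(M) ∪ {IΔJ : J ∈ T(M)}, the subgroup of the power set of {0,1,2} under symmetric difference generated by T(M) together with I. -/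
open Classical in
/-- The `j`-th connection of the `I`-double `I ≻ M` on `Ω × ℤ/2ℤ`:
`(f,i)·tⱼ = (f·rⱼ, i)` if `j ∉ I` and `(f,i)·tⱼ = (f·rⱼ, i+1)` if `j ∈ I`. -/
noncomputable def dblPerm {Ω : Type} (M : CMap Ω) (I : Set (Fin 3)) (j : Fin 3) :
    Equiv.Perm (Ω × ZMod 2) :=
  (M.r j).prodCongr (Equiv.addRight (if j ∈ I then (1 : ZMod 2) else 0))

/-!
Regard the double as a derived graph with voltage `1` on the connections indexed by `I` and `0` on
the others; an `I`-coloring is then a potential for these voltages. Voltages in a group with no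
proper nontrivial subgroup leave only two possibilities. If some closed walk has nonzero voltage,
then a whole fibre lies in one orbit and the derived graph is connected. Otherwise every orbit meets
each fibre exactly once, so an orbit is the graph of a potential.

When the derived graph is connected, a potential `b` on it changes by the same amount under a
fibre translation by `s` at every point, and this amount is a homomorphism `φ s`. Subtracting `φ`
leaves a potential on the base, for the voltages corrected by `φ`. When the derived graph is not
connected, potentials on it restrict to the graph of a potential, a copy of the base, so that
`φ = 0` suffices. The two endomorphisms of `ℤ/2ℤ` give the two parts `T M` and
`{I Δ J : J ∈ T M}`.
-/

section Orbits

open MulAction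

variable {ι X α : Type*} {r : ι → Equiv.Perm X}

/-- The connection group of a family of permutations. The family is connected when this group acts
transitively, which is expressed by `MulAction.IsPretransitive (connectionGroup r) X`. -/
abbrev connectionGroup (r : ι → Equiv.Perm X) : Subgroup (Equiv.Perm X) :=
  Subgroup.closure (Set.range r)

theorem orbit_connectionGroup_apply (r : ι → Equiv.Perm X) (j : ι) (x : X) :
    orbit (connectionGroup r) (r j x) = orbit (connectionGroup r) x :=
  orbit_smul (⟨r j, Subgroup.subset_closure ⟨j, rfl⟩⟩ : connectionGroup r) x

theorem apply_mem_orbit_connectionGroup_iff {j : ι} {x y : X} :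
    r j y ∈ orbit (connectionGroup r) x ↔ y ∈ orbit (connectionGroup r) x := by
  rw [← orbit_eq_iff, orbit_connectionGroup_apply, orbit_eq_iff]

theorem eq_of_mem_orbit_connectionGroup {φ : X → α} (hφ : ∀ j x, φ (r j x) = φ x) {x y : X}
    (h : y ∈ orbit (connectionGroup r) x) : φ y = φ x := by
  obtain ⟨⟨w, hw⟩, rfl⟩ := h
  change φ (w x) = φ x
  induction hw using Subgroup.closure_induction generalizing x with
  | mem _ hr =>
    obtain ⟨j, rfl⟩ := hr
    exact hφ j x
  | one => rfl
  | mul v w _ _ hv hw => exact hv.trans hw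
  | inv w _ hw => simpa using (hw (x := w⁻¹ x)).symm

theorem eq_of_isPretransitive_connectionGroup [IsPretransitive (connectionGroup r) X] {φ : X → α}
    (hφ : ∀ j x, φ (r j x) = φ x) (x y : X) : φ x = φ y :=
  eq_of_mem_orbit_connectionGroup hφ (exists_smul_eq (connectionGroup r) y x)

end Orbits

section Derived

open MulAction

variable {ι Ω A B : Type*}

/-- A potential for voltages `c` on a family of permutations: a function that increases by `c j`
along the `j`-th permutation. An `I`-coloring is a potential for the indicator of `I`. -/
def HasPotential [Add A] (r : ι → Equiv.Perm Ω) (c : ι → A) : Prop :=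
  ∃ a : Ω → A, ∀ j f, a (r j f) = a f + c j

/-- The derived family (skew product) of `r` for the voltages `c`, generalizing the `I`-double.
Voltages act on fibres by right addition, so left translations of fibres are automorphisms. -/
def derivedPerm [AddGroup A] (r : ι → Equiv.Perm Ω) (c : ι → A) (j : ι) :
    Equiv.Perm (Ω × A) :=
  (r j).prodCongr (Equiv.addRight (c j))

variable {r : ι → Equiv.Perm Ω}

section AddGroup

variable [AddGroup A] {c : ι → A}

@[simp]
theorem derivedPerm_apply (r : ι → Equiv.Perm Ω) (c : ι → A) (j : ι) (f : Ω) (i : A) :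
    derivedPerm r c j (f, i) = (r j f, i + c j) :=
  rfl

theorem add_mem_orbit_derivedPerm {f g : Ω} {i k : A}
    (h : (f, i) ∈ orbit (connectionGroup (derivedPerm r c)) (g, k)) (s : A) :
    (f, s + i) ∈ orbit (connectionGroup (derivedPerm r c)) (g, s + k) := by
  let translatedOrbit (x : Ω × A) := orbit (connectionGroup (derivedPerm r c)) (x.1, s + x.2)
  have invariant (j : ι) (x : Ω × A) :
      translatedOrbit (derivedPerm r c j x) = translatedOrbit x := by
    simpa [translatedOrbit, derivedPerm, add_assoc] using
      orbit_connectionGroup_apply (derivedPerm r c) j (x.1, s + x.2)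
  exact orbit_eq_iff.1 (eq_of_mem_orbit_connectionGroup invariant h)

theorem exists_mem_orbit_derivedPerm [IsPretransitive (connectionGroup r) Ω] (x : Ω × A) (f : Ω) :
    ∃ i, (f, i) ∈ orbit (connectionGroup (derivedPerm r c)) x := by
  let meetsFibre (g : Ω) := ∃ i, (g, i) ∈ orbit (connectionGroup (derivedPerm r c)) x
  have invariant (j : ι) (g : Ω) : meetsFibre (r j g) = meetsFibre g := by
    refine propext ((Equiv.addRight (c j)).exists_congr fun i => ?_).symm
    exact (apply_mem_orbit_connectionGroup_iff (r := derivedPerm r c) (j := j)).symm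
  have heq : meetsFibre x.1 = meetsFibre f := eq_of_isPretransitive_connectionGroup invariant _ _
  exact heq.mp ⟨x.2, mem_orbit_self x⟩

/-- The local voltage group at `f`: the net voltages of the closed walks based at `f`. -/
def localVoltageGroup (r : ι → Equiv.Perm Ω) (c : ι → A) (f : Ω) : AddSubgroup A where
  carrier := {s | (f, s) ∈ orbit (connectionGroup (derivedPerm r c)) (f, 0)}
  zero_mem' := mem_orbit_self _
  add_mem' {s t} hs ht := by
    have h := add_mem_orbit_derivedPerm ht s
    rw [add_zero] at h
    exact orbit_eq_iff.2 hs ▸ h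
  neg_mem' {s} hs := by
    have h := add_mem_orbit_derivedPerm hs (-s)
    rw [neg_add_cancel, add_zero] at h
    exact mem_orbit_symm.1 h

theorem neg_add_mem_localVoltageGroup {x : Ω × A} {f : Ω} {i k : A}
    (hi : (f, i) ∈ orbit (connectionGroup (derivedPerm r c)) x)
    (hk : (f, k) ∈ orbit (connectionGroup (derivedPerm r c)) x) :
    -i + k ∈ localVoltageGroup r c f := by
  have h := add_mem_orbit_derivedPerm (orbit_eq_iff.2 hi ▸ hk) (-i)
  rwa [neg_add_cancel] at h

theorem isPretransitive_derivedPerm_of_localVoltageGroup_eq_top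
    [IsPretransitive (connectionGroup r) Ω] {f : Ω} (hf : localVoltageGroup r c f = ⊤) :
    IsPretransitive (connectionGroup (derivedPerm r c)) (Ω × A) := by
  refine (isPretransitive_iff_base (f, (0 : A))).2 fun x => ?_
  obtain ⟨i, hi⟩ := exists_mem_orbit_derivedPerm (r := r) (c := c) x f
  have hfi : (f, i) ∈ orbit (connectionGroup (derivedPerm r c)) (f, 0) :=
    (hf ▸ AddSubgroup.mem_top i : i ∈ localVoltageGroup r c f)
  change x ∈ orbit (connectionGroup (derivedPerm r c)) (f, 0)
  exact orbit_eq_iff.2 hfi ▸ mem_orbit_symm.1 hi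

theorem hasPotential_of_localVoltageGroup_eq_bot
    [IsPretransitive (connectionGroup r) Ω] [Nonempty Ω]
    (h : ∀ f, localVoltageGroup r c f = ⊥) : HasPotential r c := by
  obtain ⟨f₀⟩ := ‹Nonempty Ω›
  choose a ha using exists_mem_orbit_derivedPerm (r := r) (c := c) (f₀, 0)
  refine ⟨a, fun j f => ?_⟩
  have hstep := (apply_mem_orbit_connectionGroup_iff (j := j)).2 (ha f)
  have hmem := neg_add_mem_localVoltageGroup (ha (r j f)) hstep
  rw [h, AddSubgroup.mem_bot, neg_add_eq_zero] at hmem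
  exact hmem

theorem HasPotential.not_isPretransitive_derivedPerm [Nontrivial A] [Nonempty Ω]
    (h : HasPotential r c) :
    ¬IsPretransitive (connectionGroup (derivedPerm r c)) (Ω × A) := by
  intro _
  obtain ⟨a, ha⟩ := h
  obtain ⟨f⟩ := ‹Nonempty Ω›
  obtain ⟨i, k, hik⟩ := exists_pair_ne A
  let height (x : Ω × A) := x.2 - a x.1
  have invariant (j : ι) (x : Ω × A) : height (derivedPerm r c j x) = height x := by
    simp [height, derivedPerm, ha]
  have heq : height (f, i) = height (f, k) := eq_of_isPretransitive_connectionGroup invariant _ _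
  exact hik (sub_left_injective heq)

theorem HasPotential.of_derivedPerm [Add B] {d : ι → B} (hc : HasPotential r c)
    (hd : HasPotential (derivedPerm r c) d) : HasPotential r d := by
  obtain ⟨a, ha⟩ := hc
  obtain ⟨b, hb⟩ := hd
  exact ⟨fun f => b (f, a f), fun j f => by
    simpa only [derivedPerm_apply, ha] using hb j (f, a f)⟩

theorem exists_addMonoidHom_sub_eq [AddGroup B] {d : ι → B} [Nonempty Ω]
    [IsPretransitive (connectionGroup (derivedPerm r c)) (Ω × A)] {b : Ω × A → B}
    (hb : ∀ j x, b (derivedPerm r c j x) = b x + d j) :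
    ∃ φ : A →+ B, ∀ f i s, b (f, s + i) - b (f, i) = φ s := by
  obtain ⟨f₀⟩ := ‹Nonempty Ω›
  let increment (s : A) (x : Ω × A) := b (x.1, s + x.2) - b x
  have invariant (s : A) (j : ι) (x : Ω × A) :
      increment s (derivedPerm r c j x) = increment s x := by
    have h := hb j (x.1, s + x.2)
    rw [derivedPerm_apply, add_assoc] at h
    change b (r j x.1, s + (x.2 + c j)) - b (derivedPerm r c j x) = _
    rw [h, hb, add_sub_add_right_eq_sub]
  have hconst (s : A) (x y : Ω × A) : increment s x = increment s y :=
    eq_of_isPretransitive_connectionGroup (invariant s) x y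
  refine ⟨.mk' (fun s => increment s (f₀, 0)) fun s t => ?_, fun f i s => hconst s (f, i) (f₀, 0)⟩
  rw [hconst s (f₀, 0) (f₀, t)]
  simp [increment]

variable [AddCommGroup B] {d : ι → B}

theorem HasPotential.derivedPerm_of_sub {φ : A →+ B} (h : HasPotential r fun j => d j - φ (c j)) :
    HasPotential (derivedPerm r c) d := by
  obtain ⟨a, ha⟩ := h
  refine ⟨fun x => a x.1 + φ x.2, fun j x => ?_⟩
  simp only [derivedPerm, Equiv.prodCongr_apply, Prod.map, Equiv.coe_addRight, ha, map_add]
  abel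

theorem HasPotential.exists_sub_of_derivedPerm [Nonempty Ω]
    [IsPretransitive (connectionGroup (derivedPerm r c)) (Ω × A)]
    (h : HasPotential (derivedPerm r c) d) :
    ∃ φ : A →+ B, HasPotential r fun j => d j - φ (c j) := by
  obtain ⟨b, hb⟩ := h
  obtain ⟨φ, hφ⟩ := exists_addMonoidHom_sub_eq hb
  refine ⟨φ, fun f => b (f, 0), fun j f => ?_⟩
  have hstep := hb j (f, 0)
  have htranslate := hφ (r j f) 0 (c j)
  rw [derivedPerm_apply, zero_add] at hstep
  rw [add_zero, hstep] at htranslate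
  simp only [← htranslate]
  abel

end AddGroup

section Simple

variable [AddCommGroup A] [IsSimpleAddGroup A] [Nonempty Ω]
  [IsPretransitive (connectionGroup r) Ω] {c : ι → A}

theorem isPretransitive_derivedPerm_iff_not_hasPotential :
    IsPretransitive (connectionGroup (derivedPerm r c)) (Ω × A) ↔ ¬HasPotential r c := by
  refine ⟨fun h hc => hc.not_isPretransitive_derivedPerm h, fun hc => ?_⟩
  obtain ⟨f, hf⟩ : ∃ f, localVoltageGroup r c f ≠ ⊥ := by
    by_contra! h
    exact hc (hasPotential_of_localVoltageGroup_eq_bot h)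
  exact isPretransitive_derivedPerm_of_localVoltageGroup_eq_top
    ((eq_bot_or_eq_top _).resolve_left hf)

theorem hasPotential_derivedPerm_iff [AddCommGroup B] {d : ι → B} :
    HasPotential (derivedPerm r c) d ↔ ∃ φ : A →+ B, HasPotential r fun j => d j - φ (c j) := by
  refine ⟨fun hd => ?_, fun ⟨_, h⟩ => h.derivedPerm_of_sub⟩
  by_cases hc : HasPotential r c
  · refine ⟨0, ?_⟩
    simpa only [AddMonoidHom.zero_apply, sub_zero] using hc.of_derivedPerm hd
  · have := isPretransitive_derivedPerm_iff_not_hasPotential.2 hc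
    exact hd.exists_sub_of_derivedPerm

end Simple

end Derived

section Coloring

theorem exists_addMonoidHom_zmod_two_iff {p : (ZMod 2 →+ ZMod 2) → Prop} :
    (∃ φ, p φ) ↔ p 0 ∨ p (AddMonoidHom.id (ZMod 2)) := by
  have eq_zero_or_eq_one (u : ZMod 2) : u = 0 ∨ u = 1 := by decide +revert
  have ext_one {φ ψ : ZMod 2 →+ ZMod 2} (h : φ 1 = ψ 1) : φ = ψ := by
    ext u
    obtain rfl | rfl := eq_zero_or_eq_one u
    · simp
    · exact h
  refine ⟨fun ⟨φ, hφ⟩ => ?_, fun h => h.elim (⟨_, ·⟩) (⟨_, ·⟩)⟩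
  exact (eq_zero_or_eq_one (φ 1)).imp (fun h => ext_one (ψ := 0) h ▸ hφ)
    fun h => ext_one (ψ := .id _) h ▸ hφ

theorem indicator_one_sub_indicator_one {ι R : Type*} [Ring R] [CharP R 2] (I J : Set ι) :
    J.indicator 1 - I.indicator (1 : ι → R) = (symmDiff I J).indicator 1 := by
  classical
  ext j
  by_cases hI : j ∈ I <;> by_cases hJ : j ∈ J <;>
    simp [Set.mem_symmDiff, hI, hJ, CharTwo.neg_eq]

variable {Ω : Type}

theorem colorableOn_iff_hasPotential {r : Fin 3 → Equiv.Perm Ω} {I : Set (Fin 3)} :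
    ColorableOn (fun j f => r j f) I ↔ HasPotential r (I.indicator (1 : Fin 3 → ZMod 2)) := by
  classical
  refine exists_congr fun a => forall_comm.trans (forall₂_congr fun j f => ?_)
  by_cases hj : j ∈ I <;> simp [hj]

theorem connectionGroup_fin_three (r : Fin 3 → Equiv.Perm Ω) :
    connectionGroup r = Subgroup.closure {r 0, r 1, r 2} := by
  have hrange : Set.range r = {r 0, r 1, r 2} := by
    ext w
    simp [Fin.exists_fin_succ, eq_comm]
  rw [connectionGroup, hrange]

namespace CMap

variable (M : CMap Ω) (I : Set (Fin 3))

instance isPretransitive_connectionGroup :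
    MulAction.IsPretransitive (connectionGroup M.r) Ω := by
  rw [connectionGroup_fin_three]
  refine ⟨fun f g => ?_⟩
  obtain ⟨w, hw, hfg⟩ := M.flag_transitive f g
  exact ⟨⟨w, hw⟩, hfg⟩

theorem colorable_iff_hasPotential :
    M.Colorable I ↔ HasPotential M.r (I.indicator (1 : Fin 3 → ZMod 2)) :=
  colorableOn_iff_hasPotential

theorem dblPerm_eq_derivedPerm : dblPerm M I = derivedPerm M.r (I.indicator 1) := by
  classical
  ext j x <;> simp [dblPerm, derivedPerm, Set.indicator]

/-- The `I`-double as a map, provided that its connection group is transitive. -/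
noncomputable def double
    (h : MulAction.IsPretransitive (connectionGroup (dblPerm M I)) (Ω × ZMod 2)) :
    CMap (Ω × ZMod 2) where
  r := dblPerm M I
  nonempty := have := M.nonempty; inferInstance
  invol j x := Prod.ext (M.invol j x.1) (by
    simp only [dblPerm, Equiv.prodCongr_apply, Prod.map, Equiv.coe_addRight, add_assoc,
      CharTwo.add_self_eq_zero, add_zero])
  fpf j x hx := M.fpf j x.1 (congrArg Prod.fst hx)
  comm02 x := Prod.ext (M.comm02 x.1) (add_right_comm _ _ _)
  fpf02 x hx := M.fpf02 x.1 (congrArg Prod.fst hx)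
  flag_transitive x y := by
    rw [connectionGroup_fin_three] at h
    obtain ⟨⟨w, hw⟩, hxy⟩ := h.exists_smul_eq x y
    exact ⟨w, hw, hxy⟩

theorem exists_r_eq_dblPerm_iff :
    (∃ P : CMap (Ω × ZMod 2), P.r = dblPerm M I) ↔ ¬M.Colorable I := by
  have := M.nonempty
  rw [colorable_iff_hasPotential, ← isPretransitive_derivedPerm_iff_not_hasPotential,
    ← dblPerm_eq_derivedPerm]
  exact ⟨fun ⟨P, hP⟩ => hP ▸ P.isPretransitive_connectionGroup, fun h => ⟨M.double I h, rfl⟩⟩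

theorem colorableOn_dblPerm_iff {K : Set (Fin 3)} :
    ColorableOn (fun j x => dblPerm M I j x) K ↔
      M.Colorable K ∨ M.Colorable (symmDiff I K) := by
  have := M.nonempty
  rw [colorableOn_iff_hasPotential, dblPerm_eq_derivedPerm, hasPotential_derivedPerm_iff,
    exists_addMonoidHom_zmod_two_iff, colorable_iff_hasPotential, colorable_iff_hasPotential,
    ← indicator_one_sub_indicator_one]
  simp only [AddMonoidHom.zero_apply, sub_zero, AddMonoidHom.id_apply, Pi.sub_def]

end CMap

end Coloring

theorem T_of_double_general {Ω : Type} (M : CMap Ω) (I : Set (Fin 3)) :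
    ((∃ P : CMap (Ω × ZMod 2), P.r = dblPerm M I) ↔ ¬M.Colorable I) ∧
      {J : Set (Fin 3) | ColorableOn (fun j x => dblPerm M I j x) J} =
        M.T ∪ {K : Set (Fin 3) | ∃ J ∈ M.T, K = symmDiff I J} := by
  refine ⟨M.exists_r_eq_dblPerm_iff I, Set.ext fun K => ?_⟩
  refine (M.colorableOn_dblPerm_iff I).trans (or_congr_right ⟨fun h => ?_, ?_⟩)
  · exact ⟨symmDiff I K, h, (symmDiff_symmDiff_cancel_left I K).symm⟩
  · rintro ⟨J, hJ, rfl⟩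
    rwa [symmDiff_symmDiff_cancel_left]

/-- if `M` admits no `I`-coloring, then the `I`-double `I ≻ M` is
a map (in particular its connection group is transitive on `Ω × ℤ/2ℤ`), and
`T (I ≻ M) = T M ∪ {I Δ J : J ∈ T M}`, the subgroup generated by `T M` and `I`. -/
theorem T_of_double {Ω : Type} (M : CMap Ω) (I : Set (Fin 3)) (hI : ¬M.Colorable I) :
    (∃ P : CMap (Ω × ZMod 2), P.r = dblPerm M I) ∧
      {J : Set (Fin 3) | ColorableOn (fun j x => dblPerm M I j x) J} =
        M.T ∪ {K : Set (Fin 3) | ∃ J ∈ M.T, K = symmDiff I J} :=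
  (T_of_double_general M I).imp_left fun h => h.2 hI
end
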